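/- arXiv:math/9710221 — 2 statements merged into one kernel-verified Lean document; each statement's English description precedes it below -/
import Mathlib

section
/- Let f : ℝ → ℝ be a C^∞ function and let k ∈ ℕ. If ∫₀^π f(t+α)·(sin t)^k dt = 0 for every α ∈ ℝ, then f(t+π) = (−1)^k·f(t) for every t ∈ ℝ. -/
open Real intervalIntegral

/-!
Write `I_k(α) = ∫₀^π (sin t)^k f(t + α) dt`. Integrating by parts against a primitive of `f` shows
that differentiating such an integral in `α` moves the derivative onto the weight, up to boundary
terms, even when `f` is merely continuous. For `k ≥ 2` the boundary terms vanish twice, giving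
`I_k'' = k(k - 1) I_{k-2} - k² I_k`, so that `I_k = 0` forces `I_{k-2} = 0`. The boundary terms
surviving for `k = 0` and `k = 1`, `I_0'(α) = f(π + α) - f(α)` and
`I_1''(α) = f(π + α) + f(α) - I_1(α)`, are what detects the parity.
-/

section ParametricIntegral

theorem hasDerivAt_integral_of_continuous_deriv {𝕜 E : Type*} [RCLike 𝕜]
    [NormedAddCommGroup E] [NormedSpace ℝ E] [NormedSpace 𝕜 E] {a b : ℝ} {F F' : 𝕜 → ℝ → E}
    (hF : ∀ x, Continuous (F x)) (hF' : Continuous (Function.uncurry F'))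
    (hFF' : ∀ x t, HasDerivAt (F · t) (F' x t) x) (x : 𝕜) :
    HasDerivAt (fun y ↦ ∫ t in a..b, F y t) (∫ t in a..b, F' x t) x := by
  obtain ⟨C, hC⟩ := ((isCompact_closedBall x 1).prod (isCompact_uIcc (a := a) (b := b))
    ).exists_bound_of_continuousOn hF'.continuousOn
  refine (hasDerivAt_integral_of_dominated_loc_of_deriv_le (bound := fun _ ↦ C)
    (Metric.closedBall_mem_nhds x one_pos)
    (.of_forall fun y ↦ (hF y).aestronglyMeasurable) ((hF x).intervalIntegrable a b)
    (hF'.uncurry_left x).aestronglyMeasurable (.of_forall fun t ht y hy ↦ ?_)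
    intervalIntegrable_const (.of_forall fun t _ y _ ↦ hFF' y t)).2
  exact hC (y, t) ⟨hy, Set.uIoc_subset_uIcc ht⟩

variable {E : Type*} [NormedAddCommGroup E] [NormedSpace ℝ E] [CompleteSpace E]

theorem hasDerivAt_integral_smul_comp_add {f : ℝ → E} (hf : Continuous f) {w w' : ℝ → ℝ}
    (hw : ∀ t, HasDerivAt w (w' t) t) (hw' : Continuous w') (a b α : ℝ) :
    HasDerivAt (fun β ↦ ∫ t in a..b, w t • f (t + β))
      (w b • f (b + α) - w a • f (a + α) - ∫ t in a..b, w' t • f (t + α)) α := by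
  let F : ℝ → E := fun x ↦ ∫ s in (0 : ℝ)..x, f s
  have hF (x : ℝ) : HasDerivAt F (f x) x := (hf.integral_hasStrictDerivAt 0 x).hasDerivAt
  have hF_cont : Continuous F := continuous_iff_continuousAt.2 fun x ↦ (hF x).continuousAt
  have integral_by_parts (β : ℝ) : ∫ t in a..b, w t • f (t + β) =
      w b • F (b + β) - w a • F (a + β) - ∫ t in a..b, w' t • F (t + β) :=
    integral_smul_deriv_eq_deriv_smul (fun t _ ↦ hw t)
      (fun t _ ↦ (hF (t + β)).comp_add_const t β) (hw'.intervalIntegrable a b)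
      (Continuous.intervalIntegrable (by fun_prop) a b)
  have hasDerivAt_integral_primitive : HasDerivAt (fun β ↦ ∫ t in a..b, w' t • F (t + β))
      (∫ t in a..b, w' t • f (t + α)) α :=
    hasDerivAt_integral_of_continuous_deriv (fun β ↦ by fun_prop) (by fun_prop)
      (fun β t ↦ ((hF (t + β)).comp_const_add t β).const_smul (w' t)) α
  simp only [integral_by_parts]
  exact ((((hF (b + α)).comp_const_add b α).const_smul (w b)).sub
    (((hF (a + α)).comp_const_add a α).const_smul (w a))).sub hasDerivAt_integral_primitive

end ParametricIntegral

theorem hasDerivAt_sin_pow_succ (k : ℕ) (t : ℝ) :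
    HasDerivAt (fun t ↦ sin t ^ (k + 1)) ((k + 1) * (sin t ^ k * cos t)) t :=
  ((hasDerivAt_sin t).fun_pow (k + 1)).congr_deriv (by push_cast [Nat.add_sub_cancel]; ring)

theorem hasDerivAt_sin_pow_succ_mul_cos (k : ℕ) (t : ℝ) :
    HasDerivAt (fun t ↦ sin t ^ (k + 1) * cos t)
      ((k + 1) * sin t ^ k - (k + 2) * sin t ^ (k + 2)) t :=
  ((hasDerivAt_sin_pow_succ k t).mul (hasDerivAt_cos t)).congr_deriv <| by
    linear_combination ((k + 1) * sin t ^ k) * sin_sq_add_cos_sq t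

section SinPowIntegral

variable {E : Type*} [NormedAddCommGroup E] [NormedSpace ℝ E]

/-- The integral `I_k(α)` of the shift `f (· + α)` over `[0, π]` against the weight `(sin t)^k`,
with `α` as the last argument so that `sinPowIntegral f k` is the function `I_k`. -/
noncomputable def sinPowIntegral (f : ℝ → E) (k : ℕ) (α : ℝ) : E :=
  ∫ t in (0 : ℝ)..π, sin t ^ k • f (t + α)

variable [CompleteSpace E] {f : ℝ → E}

theorem deriv_sinPowIntegral_zero (hf : Continuous f) (α : ℝ) :
    deriv (sinPowIntegral f 0) α = f (π + α) - f α := by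
  have hasDerivAt_weight (t : ℝ) : HasDerivAt (fun t ↦ sin t ^ 0) 0 t := by
    simpa only [pow_zero] using hasDerivAt_const t (1 : ℝ)
  have h : HasDerivAt (sinPowIntegral f 0) _ α :=
    hasDerivAt_integral_smul_comp_add hf hasDerivAt_weight continuous_const 0 π α
  simpa using h.deriv

theorem deriv_sinPowIntegral_succ (hf : Continuous f) (k : ℕ) :
    deriv (sinPowIntegral f (k + 1)) =
      fun α ↦ -((k + 1 : ℝ) • ∫ t in (0 : ℝ)..π, (sin t ^ k * cos t) • f (t + α)) := by
  funext α
  have h : HasDerivAt (sinPowIntegral f (k + 1)) _ α :=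
    hasDerivAt_integral_smul_comp_add hf (hasDerivAt_sin_pow_succ k) (by fun_prop) 0 π α
  simpa [mul_smul] using h.deriv

theorem deriv_deriv_sinPowIntegral_one (hf : Continuous f) (α : ℝ) :
    deriv (deriv (sinPowIntegral f 1)) α = f (π + α) + f α - sinPowIntegral f 1 α := by
  have h := hasDerivAt_integral_smul_comp_add hf hasDerivAt_cos (by fun_prop) 0 π α
  simp only [cos_pi, cos_zero, zero_add, neg_smul, one_smul, integral_neg] at h
  have h_deriv : deriv (sinPowIntegral f 1) =
      fun α ↦ -∫ t in (0 : ℝ)..π, cos t • f (t + α) := by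
    simpa using deriv_sinPowIntegral_succ hf 0
  rw [h_deriv, h.fun_neg.deriv]
  simp only [sinPowIntegral, pow_one]
  abel

theorem deriv_deriv_sinPowIntegral_add_two (hf : Continuous f) (k : ℕ) (α : ℝ) :
    deriv (deriv (sinPowIntegral f (k + 2))) α =
      ((k + 2) * (k + 1) : ℝ) • sinPowIntegral f k α
        - ((k + 2) ^ 2 : ℝ) • sinPowIntegral f (k + 2) α := by
  have h := hasDerivAt_integral_smul_comp_add hf (hasDerivAt_sin_pow_succ_mul_cos k)
    (by fun_prop) 0 π α
  have integral_weight_deriv :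
      ∫ t in (0 : ℝ)..π, ((k + 1) * sin t ^ k - (k + 2) * sin t ^ (k + 2)) • f (t + α) =
        (k + 1 : ℝ) • sinPowIntegral f k α - (k + 2 : ℝ) • sinPowIntegral f (k + 2) α := by
    simp only [sub_smul, mul_smul, sinPowIntegral]
    rw [integral_sub (Continuous.intervalIntegrable (by fun_prop) 0 π)
      (Continuous.intervalIntegrable (by fun_prop) 0 π), integral_smul, integral_smul]
  rw [integral_weight_deriv] at h
  rw [deriv_sinPowIntegral_succ hf (k + 1), (h.fun_const_smul _).fun_neg.deriv]
  simp only [sin_pi, sin_zero, ne_eq, Nat.succ_ne_zero, not_false_eq_true, zero_pow, zero_mul,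
    zero_smul]
  push_cast
  module

theorem sinPowIntegral_eq_zero_of_add_two (hf : Continuous f) {k : ℕ}
    (h : sinPowIntegral f (k + 2) = 0) : sinPowIntegral f k = 0 := by
  funext α
  have h_rec := deriv_deriv_sinPowIntegral_add_two hf k α
  simp only [h, deriv_zero, Pi.zero_apply, smul_zero, sub_zero] at h_rec
  exact (smul_eq_zero.1 h_rec.symm).resolve_left (by positivity)

theorem parity_of_shifted_weighted_integrals_vanish_general (hf : Continuous f) (k : ℕ)
    (h : ∀ α : ℝ, ∫ t in (0 : ℝ)..π, sin t ^ k • f (t + α) = 0) (t : ℝ) :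
    f (t + π) = (-1 : ℝ) ^ k • f t := by
  replace h : sinPowIntegral f k = 0 := funext h
  induction k using Nat.twoStepInduction with
  | zero =>
    have h_deriv := deriv_sinPowIntegral_zero hf t
    simp only [h, deriv_zero, Pi.zero_apply] at h_deriv
    rw [pow_zero, one_smul, add_comm, sub_eq_zero.1 h_deriv.symm]
  | one =>
    have h_deriv := deriv_deriv_sinPowIntegral_one hf t
    simp only [h, deriv_zero, Pi.zero_apply, sub_zero] at h_deriv
    rw [pow_one, neg_one_smul, add_comm, eq_neg_of_add_eq_zero_left h_deriv.symm]
  | more k ih _ =>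
    rw [ih (sinPowIntegral_eq_zero_of_add_two hf h), pow_add, neg_one_sq, mul_one]

end SinPowIntegral

/-- Part (i) of Lemma 3.2 (one-dimensional form): a smooth function whose shifted
integrals against the weight `(sin t)^k` over `[0, π]` all vanish has the parity
of `k` under translation by `π`. -/
theorem parity_of_shifted_weighted_integrals_vanish
    (f : ℝ → ℝ) (hf : ContDiff ℝ (⊤ : ℕ∞) f) (k : ℕ)
    (h : ∀ α : ℝ, ∫ t in (0:ℝ)..π, f (t + α) * Real.sin t ^ k = 0) :
    ∀ t : ℝ, f (t + π) = (-1 : ℝ) ^ k * f t :=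
  parity_of_shifted_weighted_integrals_vanish_general hf.continuous k fun α ↦ by
    simpa only [smul_eq_mul, mul_comm] using h α
end

section
/- Let n ∈ ℕ with n ≥ 2, let k ∈ ℕ, and let F be a smooth symmetric 2-cotensor field on ℝ^n. Suppose that for every unit-speed great circle γ on the unit sphere S^{n−1} ⊂ ℝ^n one has ∫₀^π F(γ(t))(γ'(t), γ'(t))·(sin t)^k dt = 0. Then for every unit vector w ∈ ℝ^n and every unit-speed great circle γ one has ∫₀^{2π} ⟨w, γ(t)⟩^k · F(γ(t))(γ'(t), γ'(t)) dt = 0. -/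
open Real intervalIntegral
open scoped RealInnerProductSpace

/-!
Every great circle meets the hyperplane `w^⊥`. Restarting the parametrization at such a point
turns `⟨w, γ(t)⟩` into `c * sin t`, with `c = ⟨w, γ'(0)⟩`, and does not change the integral over
the full circle. The second half of the circle is the half great circle starting at `-γ(0)` with
velocity `-γ'(0)`, on which the weight `sin t ^ k` changes only by the factor `(-1) ^ k`. So the
full integral is a combination of two half-circle integrals, both of which vanish.
-/

section GreatCircle

variable {E : Type*} [AddCommGroup E] [Module ℝ E]

/-- The curve `γ(t) = (cos t) u + (sin t) v`, a unit-speed great circle when `(u, v)` is an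
orthonormal pair. -/
noncomputable def greatCircle (u v : E) (t : ℝ) : E :=
  Real.cos t • u + Real.sin t • v

/-- The velocity `γ'(t)` of `greatCircle u v`, given by its explicit formula. -/
noncomputable def greatCircleVelocity (u v : E) (t : ℝ) : E :=
  -Real.sin t • u + Real.cos t • v

theorem greatCircleVelocity_eq_greatCircle (u v : E) (t : ℝ) :
    greatCircleVelocity u v t = greatCircle v (-u) t := by
  unfold greatCircleVelocity greatCircle
  module

theorem greatCircle_add (u v : E) (t s : ℝ) :
    greatCircle u v (t + s) =
      greatCircle (greatCircle u v s) (greatCircleVelocity u v s) t := by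
  simp only [greatCircle, greatCircleVelocity, Real.cos_add, Real.sin_add]
  module

theorem greatCircleVelocity_add (u v : E) (t s : ℝ) :
    greatCircleVelocity u v (t + s) =
      greatCircleVelocity (greatCircle u v s) (greatCircleVelocity u v s) t := by
  simp only [greatCircle, greatCircleVelocity, Real.cos_add, Real.sin_add]
  module

theorem greatCircle_add_pi (u v : E) (t : ℝ) :
    greatCircle u v (t + π) = greatCircle (-u) (-v) t := by
  simp only [greatCircle, Real.cos_add_pi, Real.sin_add_pi, neg_smul, smul_neg]

theorem greatCircleVelocity_add_pi (u v : E) (t : ℝ) :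
    greatCircleVelocity u v (t + π) = greatCircleVelocity (-u) (-v) t := by
  simp only [greatCircleVelocity, Real.cos_add_pi, Real.sin_add_pi, neg_smul, smul_neg]

theorem periodic_comp_greatCircle {X : Type*} (f : E → E → X) (u v : E) :
    Function.Periodic (fun t => f (greatCircle u v t) (greatCircleVelocity u v t)) (2 * π) := by
  intro t
  simp only [greatCircle, greatCircleVelocity, Real.cos_add_two_pi, Real.sin_add_two_pi]

theorem intervalIntegrable_comp_greatCircle_rotate {X : Type*} [NormedAddCommGroup X]
    {f : E → E → X} {u v : E}
    (hf : IntervalIntegrable (fun t => f (greatCircle u v t) (greatCircleVelocity u v t))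
      MeasureTheory.volume 0 (2 * π)) (s : ℝ) :
    IntervalIntegrable
      (fun t => f (greatCircle (greatCircle u v s) (greatCircleVelocity u v s) t)
        (greatCircleVelocity (greatCircle u v s) (greatCircleVelocity u v s) t))
      MeasureTheory.volume 0 (2 * π) := by
  have hf_shifted := (periodic_comp_greatCircle f u v).intervalIntegrable₀ two_pi_pos.ne' hf s
    (2 * π + s)
  simpa only [greatCircle_add, greatCircleVelocity_add, sub_self, add_sub_cancel_right] using
    hf_shifted.comp_add_right s

end GreatCircle

section InnerProduct

variable {E : Type*} [NormedAddCommGroup E] [InnerProductSpace ℝ E] {u v : E}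

theorem norm_greatCircle (hnorm : ‖u‖ = ‖v‖) (huv : ⟪u, v⟫ = 0) (t : ℝ) :
    ‖greatCircle u v t‖ = ‖u‖ := by
  have norm_sq : ‖greatCircle u v t‖ ^ 2 = ‖u‖ ^ 2 := by
    rw [greatCircle, norm_add_sq_real, norm_smul, norm_smul, real_inner_smul_left,
      real_inner_smul_right, huv, ← hnorm, mul_pow, mul_pow, Real.norm_eq_abs, Real.norm_eq_abs,
      sq_abs, sq_abs]
    linear_combination ‖u‖ ^ 2 * Real.cos_sq_add_sin_sq t
  exact (sq_eq_sq₀ (norm_nonneg _) (norm_nonneg _)).1 norm_sq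

theorem norm_greatCircleVelocity (hnorm : ‖u‖ = ‖v‖) (huv : ⟪u, v⟫ = 0) (t : ℝ) :
    ‖greatCircleVelocity u v t‖ = ‖v‖ := by
  rw [greatCircleVelocity_eq_greatCircle]
  exact norm_greatCircle (by rw [norm_neg, hnorm])
    (by rw [inner_neg_right, real_inner_comm, huv, neg_zero]) t

theorem inner_greatCircle_greatCircleVelocity (hnorm : ‖u‖ = ‖v‖) (huv : ⟪u, v⟫ = 0) (t : ℝ) :
    ⟪greatCircle u v t, greatCircleVelocity u v t⟫ = 0 := by
  have hvu : ⟪v, u⟫ = 0 := by rw [real_inner_comm, huv]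
  simp only [greatCircle, greatCircleVelocity, inner_add_left, inner_add_right,
    real_inner_smul_left, real_inner_smul_right, real_inner_self_eq_norm_sq, huv, hvu, hnorm]
  ring

theorem inner_greatCircle_of_inner_eq_zero {w : E} (hwu : ⟪w, u⟫ = 0) (t : ℝ) :
    ⟪w, greatCircle u v t⟫ = ⟪w, v⟫ * Real.sin t := by
  rw [greatCircle, inner_add_right, real_inner_smul_right, real_inner_smul_right, hwu, mul_zero,
    zero_add, mul_comm]

theorem exists_inner_greatCircle_eq_zero (w u v : E) : ∃ s, ⟪w, greatCircle u v s⟫ = 0 := by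
  have hcont : Continuous fun s => ⟪w, greatCircle u v s⟫ := by
    unfold greatCircle
    fun_prop
  have at_zero : ⟪w, greatCircle u v 0⟫ = ⟪w, u⟫ := by simp [greatCircle]
  have at_pi : ⟪w, greatCircle u v π⟫ = -⟪w, u⟫ := by simp [greatCircle]
  rcases le_total ⟪w, u⟫ 0 with hle | hge
  · exact mem_range_of_exists_le_of_exists_ge hcont ⟨0, by rwa [at_zero]⟩
      ⟨π, by rwa [at_pi, neg_nonneg]⟩
  · exact mem_range_of_exists_le_of_exists_ge hcont ⟨π, by rwa [at_pi, neg_nonpos]⟩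
      ⟨0, by rwa [at_zero]⟩

end InnerProduct

section Integral

variable {X : Type*} [NormedAddCommGroup X] [NormedSpace ℝ X]

theorem integral_sin_pow_smul_eq_add (k : ℕ) {g : ℝ → X}
    (hg : IntervalIntegrable g MeasureTheory.volume 0 (2 * π)) :
    ∫ t in (0:ℝ)..(2 * π), Real.sin t ^ k • g t =
      (∫ t in (0:ℝ)..π, Real.sin t ^ k • g t) +
        (-1 : ℝ) ^ k • ∫ t in (0:ℝ)..π, Real.sin t ^ k • g (t + π) := by
  have hint : IntervalIntegrable (fun t => Real.sin t ^ k • g t) MeasureTheory.volume 0 (2 * π) :=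
    hg.continuousOn_smul (by fun_prop)
  have hpi : π ∈ Set.uIcc 0 (2 * π) :=
    Set.mem_uIcc_of_le pi_pos.le (by linarith [pi_pos])
  have second_half : ∫ t in π..(2 * π), Real.sin t ^ k • g t =
      (-1 : ℝ) ^ k • ∫ t in (0:ℝ)..π, Real.sin t ^ k • g (t + π) := by
    calc ∫ t in π..(2 * π), Real.sin t ^ k • g t
        = ∫ t in (0:ℝ)..π, Real.sin (t + π) ^ k • g (t + π) := by
          rw [integral_comp_add_right (fun t => Real.sin t ^ k • g t), zero_add, two_mul]
      _ = ∫ t in (0:ℝ)..π, (-1 : ℝ) ^ k • Real.sin t ^ k • g (t + π) := by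
          simp only [Real.sin_add_pi, neg_pow (Real.sin _), mul_smul]
      _ = (-1 : ℝ) ^ k • ∫ t in (0:ℝ)..π, Real.sin t ^ k • g (t + π) := integral_smul _ _
  rw [← second_half, integral_add_adjacent_intervals
    (hint.mono_set (Set.uIcc_subset_uIcc_left hpi))
    (hint.mono_set (Set.uIcc_subset_uIcc_right hpi))]

section Module

variable {E : Type*} [AddCommGroup E] [Module ℝ E]

theorem integral_sin_pow_smul_comp_greatCircle_eq_add (k : ℕ) {f : E → E → X} {u v : E}
    (hf : IntervalIntegrable (fun t => f (greatCircle u v t) (greatCircleVelocity u v t))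
      MeasureTheory.volume 0 (2 * π)) :
    ∫ t in (0:ℝ)..(2 * π),
        Real.sin t ^ k • f (greatCircle u v t) (greatCircleVelocity u v t) =
      (∫ t in (0:ℝ)..π, Real.sin t ^ k • f (greatCircle u v t) (greatCircleVelocity u v t)) +
        (-1 : ℝ) ^ k • ∫ t in (0:ℝ)..π,
          Real.sin t ^ k • f (greatCircle (-u) (-v) t) (greatCircleVelocity (-u) (-v) t) := by
  simp only [integral_sin_pow_smul_eq_add k hf, greatCircle_add_pi, greatCircleVelocity_add_pi]

theorem integral_comp_greatCircle_rotate (f : E → E → X) (u v : E) (s : ℝ) :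
    ∫ t in (0:ℝ)..(2 * π),
        f (greatCircle (greatCircle u v s) (greatCircleVelocity u v s) t)
          (greatCircleVelocity (greatCircle u v s) (greatCircleVelocity u v s) t) =
      ∫ t in (0:ℝ)..(2 * π), f (greatCircle u v t) (greatCircleVelocity u v t) := by
  simp only [← greatCircle_add, ← greatCircleVelocity_add]
  rw [integral_comp_add_right (fun t => f (greatCircle u v t) (greatCircleVelocity u v t)),
    zero_add, add_comm (2 * π), (periodic_comp_greatCircle f u v).intervalIntegral_add_eq s 0,
    zero_add]

end Module

variable {E : Type*} [NormedAddCommGroup E] [InnerProductSpace ℝ E]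

theorem full_circle_integrals_vanish_general (k : ℕ) (f : E → E → X)
    (h : ∀ u v : E, ‖u‖ = 1 → ‖v‖ = 1 → ⟪u, v⟫ = 0 →
      ∫ t in (0:ℝ)..π,
        Real.sin t ^ k • f (greatCircle u v t) (greatCircleVelocity u v t) = 0)
    (w : E) {u v : E} (hu : ‖u‖ = 1) (hv : ‖v‖ = 1) (huv : ⟪u, v⟫ = 0)
    (hf : IntervalIntegrable (fun t => f (greatCircle u v t) (greatCircleVelocity u v t))
      MeasureTheory.volume 0 (2 * π)) :
    ∫ t in (0:ℝ)..(2 * π),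
      ⟪w, greatCircle u v t⟫ ^ k • f (greatCircle u v t) (greatCircleVelocity u v t) = 0 := by
  obtain ⟨s, hs⟩ := exists_inner_greatCircle_eq_zero w u v
  rw [← integral_comp_greatCircle_rotate (fun x V => ⟪w, x⟫ ^ k • f x V) u v s]
  have hf' := intervalIntegrable_comp_greatCircle_rotate hf s
  have hnorm : ‖u‖ = ‖v‖ := hu.trans hv.symm
  have hu' := (norm_greatCircle hnorm huv s).trans hu
  have hv' := (norm_greatCircleVelocity hnorm huv s).trans hv
  have huv' := inner_greatCircle_greatCircleVelocity hnorm huv s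
  set u' := greatCircle u v s
  set v' := greatCircleVelocity u v s
  have sin_integral_eq_zero : ∫ t in (0:ℝ)..(2 * π),
      Real.sin t ^ k • f (greatCircle u' v' t) (greatCircleVelocity u' v' t) = 0 := by
    rw [integral_sin_pow_smul_comp_greatCircle_eq_add k hf', h u' v' hu' hv' huv',
      h (-u') (-v') (by rwa [norm_neg]) (by rwa [norm_neg]) (by rwa [inner_neg_neg]),
      smul_zero, add_zero]
  simp only [inner_greatCircle_of_inner_eq_zero hs, mul_pow, mul_smul, integral_smul,
    sin_integral_eq_zero, smul_zero]

end Integral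

/-- Step in the proof of part (ii) of Lemma 3.2: if the `(sin t)^k`-weighted
geodesic X-ray transform of a smooth symmetric 2-cotensor field `F` vanishes, then
for every unit vector `w` the integrals of `⟨w, γ(t)⟩^k F(γ(t))(γ'(t), γ'(t))` over
full great circles vanish. -/
theorem full_circle_integrals_vanish
    (n : ℕ) (hn : 2 ≤ n) (k : ℕ)
    (F : EuclideanSpace ℝ (Fin n) →
      (EuclideanSpace ℝ (Fin n) →L[ℝ] EuclideanSpace ℝ (Fin n) →L[ℝ] ℝ))
    (hF : ContDiff ℝ (⊤ : ℕ∞) F)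
    (hsymm : ∀ x V W, F x V W = F x W V)
    (h : ∀ u v : EuclideanSpace ℝ (Fin n), ‖u‖ = 1 → ‖v‖ = 1 → ⟪u, v⟫ = 0 →
      ∫ t in (0:ℝ)..π,
        F (Real.cos t • u + Real.sin t • v)
          (-Real.sin t • u + Real.cos t • v) (-Real.sin t • u + Real.cos t • v)
          * Real.sin t ^ k = 0) :
    ∀ w : EuclideanSpace ℝ (Fin n), ‖w‖ = 1 →
      ∀ u v : EuclideanSpace ℝ (Fin n), ‖u‖ = 1 → ‖v‖ = 1 → ⟪u, v⟫ = 0 →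
        ∫ t in (0:ℝ)..(2 * π),
          ⟪w, Real.cos t • u + Real.sin t • v⟫ ^ k *
            F (Real.cos t • u + Real.sin t • v)
              (-Real.sin t • u + Real.cos t • v) (-Real.sin t • u + Real.cos t • v)
          = 0 := by
  intro w _ u v hu hv huv
  refine full_circle_integrals_vanish_general k (fun x V => F x V V)
    (fun u v hu hv huv => ?_) w hu hv huv (Continuous.intervalIntegrable ?_ _ _)
  · simp only [smul_eq_mul, mul_comm (_ ^ k)]
    exact h u v hu hv huv
  · have hF_cont := hF.continuous
    unfold greatCircle greatCircleVelocity
    fun_prop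
end
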